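/- Let N be a positive integer, h = (h₁,h₂) ∈ ℤ², and τ ∈ H. Then sup_{t > 0} |Θ̃_h(τ,t)| < ∞, i.e. the function t ↦ Θ̃_h(τ,t) is bounded on (0,∞). -/

import Mathlib

open MeasureTheory Filter Set

noncomputable section

/-- `e(z) = exp(2πiz)` -/
def eC (z : ℂ) : ℂ := Complex.exp (2 * Real.pi * Complex.I * z)

/-- The complementary error function `erfc(x) = (2/√π)∫_x^∞ e^{-r²} dr`. -/
def erfc (x : ℝ) : ℝ := (2 / Real.sqrt Real.pi) * ∫ r in Set.Ioi x, Real.exp (-(r ^ 2))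

/-- `φ*_τ(x,y) = e(((y²-x²)/2)τ)·sgn(x)·erfc(√(2πv)|x|)`. -/
def phiStar (τ : ℂ) (x y : ℝ) : ℂ :=
  eC ((((y : ℂ) ^ 2 - (x : ℂ) ^ 2) / 2) * τ) * (Real.sign x : ℂ) *
    (erfc (Real.sqrt (2 * Real.pi * τ.im) * |x|) : ℂ)

/-- `φ⁺_τ(x,y) = e(((y²-x²)/2)τ)·sgn(x)·1_{y²>x²}`. -/
def phiPlus (τ : ℂ) (x y : ℝ) : ℂ :=
  eC ((((y : ℂ) ^ 2 - (x : ℂ) ^ 2) / 2) * τ) * (Real.sign x : ℂ) *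
    (if x ^ 2 < y ^ 2 then 1 else 0)

/-- `φ̃_τ = φ⁺_τ - φ*_τ`. -/
def phiTilde (τ : ℂ) (x y : ℝ) : ℂ := phiPlus τ x y - phiStar τ x y

/-- The isometry `ι_t(x₁,x₂) = ((t⁻¹x₁+tx₂)/√(2N), (t⁻¹x₁-tx₂)/√(2N))`. -/
def iota (N : ℕ) (t x₁ x₂ : ℝ) : ℝ × ℝ :=
  ((t⁻¹ * x₁ + t * x₂) / Real.sqrt (2 * N), (t⁻¹ * x₁ - t * x₂) / Real.sqrt (2 * N))

/-- `⟨x⟩ ∈ (0,1]`, the representative of `x` modulo `ℤ` lying in `(0,1]`. -/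
def frac01 (x : ℝ) : ℝ := x - ⌈x⌉ + 1

/-- The constant coefficient `c_h(0)`. -/
def cH0 (N : ℕ) (h : ℤ × ℤ) : ℝ :=
  if ¬ ((N : ℤ) ∣ h.1) ∧ (N : ℤ) ∣ h.2 then 1 / 2 - frac01 ((h.1 : ℝ) / N)
  else if ((N : ℤ) ∣ h.1) ∧ ¬ ((N : ℤ) ∣ h.2) then 1 / 2 - frac01 ((h.2 : ℝ) / N)
  else 0

/-- `Θ̃_h(τ,t) = c_h(0) + Σ_{x ≡ h (N)} φ̃_τ(ι_t(x₁,x₂))`; the index `p ∈ ℤ²`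
corresponds to `x_j = h_j + N·p_j`. -/
def ThetaTilde (N : ℕ) (h : ℤ × ℤ) (τ : ℂ) (t : ℝ) : ℂ :=
  (cH0 N h : ℂ) + ∑' p : ℤ × ℤ,
    phiTilde τ (iota N t ((h.1 + N * p.1 : ℤ) : ℝ) ((h.2 + N * p.2 : ℤ) : ℝ)).1
               (iota N t ((h.1 + N * p.1 : ℤ) : ℝ) ((h.2 + N * p.2 : ℤ) : ℝ)).2

lemma gaussInt : Integrable (fun r : ℝ => Real.exp (-(r ^ 2))) := by
  simpa using integrable_exp_neg_mul_sq (b := 1) one_pos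

lemma erfc_nonneg (x : ℝ) : 0 ≤ erfc x := by
  unfold erfc
  have : 0 ≤ ∫ r in Set.Ioi x, Real.exp (-(r ^ 2)) :=
    integral_nonneg fun r => (Real.exp_pos _).le
  positivity

lemma erfc_anti {x y : ℝ} (h : x ≤ y) : erfc y ≤ erfc x := by
  unfold erfc
  refine mul_le_mul_of_nonneg_left ?_ (by positivity)
  refine setIntegral_mono_set gaussInt.integrableOn ?_ ?_
  · exact Eventually.of_forall fun r => (Real.exp_pos _).le
  · exact (Ioi_subset_Ioi h).eventuallyLE

lemma erfc_le {x : ℝ} (hx : 0 ≤ x) : erfc x ≤ Real.exp (-(x ^ 2)) := by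
  unfold erfc
  have h1 : ∫ r in Set.Ioi x, Real.exp (-(r ^ 2)) = ∫ s in Set.Ioi (0:ℝ), Real.exp (-((s + x) ^ 2)) := by
    have := (measurePreserving_add_right (volume : Measure ℝ) x).setIntegral_preimage_emb
      (measurableEmbedding_addRight x) (fun r => Real.exp (-(r ^ 2))) (Set.Ioi x)
    rw [← this]
    simp
  have h2 : ∫ s in Set.Ioi (0:ℝ), Real.exp (-((s + x) ^ 2))
      ≤ ∫ s in Set.Ioi (0:ℝ), Real.exp (-(x ^ 2)) * Real.exp (-(s ^ 2)) := by
    refine setIntegral_mono_on ?_ ?_ measurableSet_Ioi ?_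
    · exact (gaussInt.comp_add_right x).integrableOn
    · exact (gaussInt.const_mul _).integrableOn
    · intro s hs
      have hs : 0 < s := hs
      rw [← Real.exp_add]
      apply Real.exp_le_exp.mpr
      nlinarith [mul_nonneg hs.le hx]
  have h3 : ∫ s in Set.Ioi (0:ℝ), Real.exp (-(s ^ 2)) = Real.sqrt Real.pi / 2 := by
    simpa using integral_gaussian_Ioi 1
  rw [integral_const_mul, h3] at h2
  rw [h1]
  have hp : 0 < Real.sqrt Real.pi := Real.sqrt_pos.mpr Real.pi_pos
  calc 2 / Real.sqrt Real.pi * _ ≤ 2 / Real.sqrt Real.pi * (Real.exp (-(x ^ 2)) * (Real.sqrt Real.pi / 2)) :=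
        mul_le_mul_of_nonneg_left h2 (by positivity)
    _ = Real.exp (-(x ^ 2)) := by field_simp

lemma summ_exp {k : ℝ} (hk : 0 < k) : Summable fun n : ℤ => Real.exp (-(k * |(n:ℝ)|)) := by
  have h : Summable fun n : ℕ => Real.exp (n * (-k)) :=
    Real.summable_exp_nat_mul_iff.mpr (by linarith)
  refine Summable.of_nat_of_neg ?_ ?_
  · refine h.congr fun n => ?_
    congr 1; simp; ring
  · refine h.congr fun n => ?_
    congr 1; simp; ring

lemma inj_aff (N : ℕ) (hN : 0 < N) (k : ℤ) : Function.Injective fun n : ℤ => k + N * n := by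
  intro a b hab
  simpa [hN.ne'] using hab

set_option maxHeartbeats 1000000 in
/-- One dimensional alternating estimate. -/
lemma axis0 (N : ℕ) (hN : 0 < N) (k : ℤ) (hk0 : 0 ≤ k) (hkN : k < N) (g : ℝ → ℝ)
    (ha : ∀ x y, 0 ≤ x → x ≤ y → g y ≤ g x) (hg : ∀ x, 0 ≤ g x) (h1 : g 0 ≤ 1)
    (F : ℤ → ℝ) (hF : ∀ m, F m = Real.sign m * g |(m:ℝ)|)
    (hs : Summable fun n : ℤ => F (k + N * n)) :
    ‖∑' n : ℤ, F (k + N * n)‖ ≤ 2 := by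
  have hk0' : (0:ℝ) ≤ k := by exact_mod_cast hk0
  have hkN' : (k:ℝ) < N := by exact_mod_cast hkN
  have hN' : (0:ℝ) < N := by exact_mod_cast hN
  have s1 : Summable fun n : ℕ => F (k + N * (n:ℤ)) :=
    hs.comp_injective (i := fun n : ℕ => (n:ℤ)) Nat.cast_injective
  have s2 : Summable fun n : ℕ => F (k + N * (-((n:ℤ) + 1))) :=
    hs.comp_injective (i := fun n : ℕ => -((n:ℤ) + 1)) (by intro a b; simp)
  rw [tsum_of_nat_of_neg_add_one (f := fun n : ℤ => F (k + N * n)) s1 s2, ← s1.tsum_add s2]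
  set d : ℕ → ℝ := fun n => F (k + N * (n:ℤ)) + F (k + N * (-((n:ℤ) + 1))) with hd
  have hb : ∀ n, |d n| ≤ g (N * (n:ℝ)) - g (N * ((n + 1 : ℕ) : ℝ)) + (if n = 0 then 1 else 0) := by
    intro n
    have hn0 : (0:ℝ) ≤ n := Nat.cast_nonneg n
    have hNn : 0 ≤ (N:ℝ) * n := by positivity
    have e2 : F (k + N * (-((n:ℤ) + 1))) = - g (N * ((n:ℝ) + 1) - k) := by
      rw [hF]
      push_cast
      have : (k:ℝ) + N * (-((n:ℝ) + 1)) < 0 := by nlinarith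
      rw [Real.sign_of_neg this, abs_of_neg this]
      ring_nf
    have b1 : g (N * ((n:ℝ) + 1)) ≤ g (N * ((n:ℝ) + 1) - k) := ha _ _ (by nlinarith) (by linarith)
    have b2 : g (N * ((n:ℝ) + 1) - k) ≤ g (N * n) := ha _ _ hNn (by linarith)
    have b3 : g (N * ((n:ℝ) + 1)) ≤ g (k + N * (n:ℝ)) := ha _ _ (by linarith) (by linarith)
    have b4 : g (k + N * (n:ℝ)) ≤ g (N * n) := ha _ _ hNn (by linarith)
    simp only [hd]
    rw [e2, hF]
    push_cast
    rcases (show 0 ≤ (k:ℝ) + N * n by linarith).eq_or_lt with hz | hz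
    · have hn : (N:ℝ) * n = 0 := by linarith
      have hn' : n = 0 := by
        rcases mul_eq_zero.mp hn with h | h
        · exact absurd h hN'.ne'
        · exact_mod_cast h
      rw [← hz]
      subst hn'
      simp only [Real.sign_zero, zero_mul, if_true, abs_le]
      have := hg (N * (((0:ℕ):ℝ) + 1) - k)
      have h00 : (N:ℝ) * ((0:ℕ):ℝ) = 0 := by simp
      rw [h00] at b2 ⊢
      constructor <;> linarith
    · rw [Real.sign_of_pos hz, abs_of_pos hz, abs_le]
      split_ifs <;> constructor <;> linarith
  have hsum : ∀ n, ∑ i ∈ Finset.range n, |d i| ≤ 2 := by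
    intro n
    refine (Finset.sum_le_sum fun i _ => hb i).trans ?_
    rw [Finset.sum_add_distrib, Finset.sum_range_sub' (fun n : ℕ => g (N * (n:ℝ)))]
    have := hg (N * (n:ℝ))
    have h5 : ∑ i ∈ Finset.range n, (if i = 0 then (1:ℝ) else 0) ≤ 1 := by
      rw [Finset.sum_ite_eq']
      split_ifs <;> norm_num
    simp only [Nat.cast_zero, mul_zero]
    linarith
  have hsd : Summable fun i => |d i| := summable_of_sum_range_le (fun _ => abs_nonneg _) hsum
  refine (norm_tsum_le_tsum_norm hsd).trans ?_
  exact Real.tsum_le_of_sum_range_le (fun _ => abs_nonneg _) hsum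

lemma axis (N : ℕ) (hN : 0 < N) (k : ℤ) (g : ℝ → ℝ)
    (ha : ∀ x y, 0 ≤ x → x ≤ y → g y ≤ g x) (hg : ∀ x, 0 ≤ g x) (h1 : g 0 ≤ 1)
    (F : ℤ → ℝ) (hF : ∀ m, F m = Real.sign m * g |(m:ℝ)|)
    (hs : Summable fun n : ℤ => F (k + N * n)) :
    ‖∑' n : ℤ, F (k + N * n)‖ ≤ 2 := by
  have hN' : (0:ℤ) < N := by exact_mod_cast hN
  have e : ∀ n : ℤ, F (k % N + N * (Equiv.addRight (k / N) n)) = F (k + N * n) := by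
    intro n
    congr 1
    have := Int.emod_add_mul_ediv k N
    simp only [Equiv.coe_addRight]
    linear_combination this
  have hs' : Summable fun n : ℤ => F (k % N + N * n) := by
    rw [← (Equiv.addRight (k / N)).summable_iff]
    exact hs.congr fun n => (e n).symm
  have := axis0 N hN (k % N) (Int.emod_nonneg _ hN'.ne') (Int.emod_lt_of_pos _ hN') g ha hg h1 F hF hs'
  rw [← (Equiv.addRight (k / N)).tsum_eq] at this
  simpa only [e] using this

/-- The erfc specialisation. -/
lemma axisE (N : ℕ) (hN : 0 < N) (k : ℤ) (α : ℝ) (hα : 0 < α) :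
    (Summable fun n : ℤ => ((- (Real.sign ((k + N * n : ℤ) : ℝ) *
        erfc (α * |((k + N * n : ℤ) : ℝ)|)) : ℝ) : ℂ)) ∧
    ‖∑' n : ℤ, ((- (Real.sign ((k + N * n : ℤ) : ℝ) *
        erfc (α * |((k + N * n : ℤ) : ℝ)|)) : ℝ) : ℂ)‖ ≤ 2 := by
  let F : ℤ → ℝ := fun m => Real.sign m * erfc (α * |(m:ℝ)|)
  have hs : Summable fun n : ℤ => F (k + N * n) := by
    have h0 : Summable F := by
      refine Summable.of_norm_bounded (summ_exp (k := α ^ 2) (by positivity)) fun m => ?_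
      simp only [F]
      rw [norm_mul, Real.norm_eq_abs, Real.norm_eq_abs, abs_of_nonneg (erfc_nonneg _)]
      have hsg : |Real.sign (m:ℝ)| ≤ 1 := by
        rcases Real.sign_apply_eq (m:ℝ) with h | h | h <;> rw [h] <;> norm_num
      have hm : |(m:ℝ)| ≤ |(m:ℝ)| ^ 2 := by
        rcases eq_or_ne m 0 with h | h
        · simp [h]
        · have : (1:ℝ) ≤ |(m:ℝ)| := by exact_mod_cast Int.one_le_abs h
          nlinarith
      calc _ ≤ 1 * erfc (α * |(m:ℝ)|) := mul_le_mul_of_nonneg_right hsg (erfc_nonneg _)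
        _ ≤ Real.exp (-((α * |(m:ℝ)|) ^ 2)) := by rw [one_mul]; exact erfc_le (by positivity)
        _ ≤ _ := by
          apply Real.exp_le_exp.mpr
          rw [mul_pow]
          nlinarith [mul_le_mul_of_nonneg_left hm (sq_nonneg α)]
    exact h0.comp_injective (inj_aff N hN k)
  have hb := axis N hN k (fun s => erfc (α * s))
    (fun x y _ hxy => erfc_anti (mul_le_mul_of_nonneg_left hxy hα.le))
    (fun x => erfc_nonneg _) (by simpa using erfc_le (le_refl (0:ℝ))) F (fun m => rfl) hs
  constructor
  · exact Complex.summable_ofReal.mpr hs.neg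
  · rw [← Complex.ofReal_tsum, tsum_neg, Complex.norm_real, norm_neg]
    exact hb

lemma line (N : ℕ) (hN : 0 < N) (k : ℤ) (b : ℤ → ℂ) (hs : Summable b) (hb : ‖∑' n, b n‖ ≤ 2) :
    Summable (fun p : ℤ × ℤ => if k + N * p.1 = 0 then b p.2 else 0) ∧
    ‖∑' p : ℤ × ℤ, (if k + N * p.1 = 0 then b p.2 else 0)‖ ≤ 2 := by
  by_cases hq : ∃ q : ℤ, k + N * q = 0
  · obtain ⟨q, hq⟩ := hq
    have hi : Function.Injective fun n : ℤ => (q, n) := fun a b h => by simpa using h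
    have hz : ∀ p ∉ Set.range (fun n : ℤ => (q, n)), (if k + N * p.1 = 0 then b p.2 else 0) = 0 := by
      intro p hp
      rw [if_neg]
      intro h
      apply hp
      refine ⟨p.2, ?_⟩
      have : p.1 = q := inj_aff N hN k (by simp only; rw [h, hq])
      rw [← this]
    constructor
    · rw [← hi.summable_iff hz]
      refine hs.congr fun n => ?_
      simp [hq]
    · rw [← hi.tsum_eq (Function.support_subset_iff'.mpr hz)]
      simpa [hq] using hb
  · push Not at hq
    simp [hq, summable_zero]

lemma norm_eC (r : ℝ) (τ : ℂ) : ‖eC ((r:ℂ) * τ)‖ = Real.exp (-(2 * Real.pi * (r * τ.im))) := by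
  unfold eC
  rw [Complex.norm_exp]
  congr 1
  simp

lemma norm_sign (x : ℝ) : ‖(Real.sign x : ℂ)‖ ≤ 1 := by
  rw [Complex.norm_real]
  rcases Real.sign_apply_eq x with h | h | h <;> rw [h] <;> norm_num

lemma phi_bound (τ : ℂ) (hτ : 0 < τ.im) (x y : ℝ) :
    ‖phiTilde τ x y‖ ≤ 2 * Real.exp (-(Real.pi * τ.im * |y ^ 2 - x ^ 2|)) := by
  have hc : (((y : ℂ) ^ 2 - (x : ℂ) ^ 2) / 2) = (((y ^ 2 - x ^ 2) / 2 : ℝ) : ℂ) := by push_cast; ring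
  have hpv : 0 < Real.pi * τ.im := by positivity
  have hP : ‖phiPlus τ x y‖ ≤ Real.exp (-(Real.pi * τ.im * |y ^ 2 - x ^ 2|)) := by
    unfold phiPlus
    split_ifs with h
    · rw [mul_one, norm_mul, hc, norm_eC, abs_of_pos (by linarith)]
      refine (mul_le_of_le_one_right (Real.exp_pos _).le (norm_sign x)).trans (le_of_eq ?_)
      congr 1; ring
    · rw [mul_zero, norm_zero]; positivity
  have hS : ‖phiStar τ x y‖ ≤ Real.exp (-(Real.pi * τ.im * |y ^ 2 - x ^ 2|)) := by
    unfold phiStar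
    rw [norm_mul, norm_mul, hc, norm_eC, Complex.norm_real (erfc _), Real.norm_eq_abs (erfc _),
      abs_of_nonneg (erfc_nonneg _)]
    have he := erfc_le (x := Real.sqrt (2 * Real.pi * τ.im) * |x|) (by positivity)
    rw [mul_pow, Real.sq_sqrt (by positivity), sq_abs] at he
    refine (mul_le_mul (mul_le_of_le_one_right (Real.exp_pos _).le (norm_sign x)) he
      (erfc_nonneg _) (Real.exp_pos _).le).trans ?_
    rw [← Real.exp_add]
    apply Real.exp_le_exp.mpr
    have : |y ^ 2 - x ^ 2| ≤ x ^ 2 + y ^ 2 := by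
      rw [abs_le]; constructor <;> nlinarith [sq_nonneg x, sq_nonneg y]
    nlinarith [mul_le_mul_of_nonneg_left this hpv.le]
  unfold phiTilde
  refine (norm_sub_le _ _).trans ?_
  linarith

lemma phi_axis (τ : ℂ) (x y : ℝ) (h : y ^ 2 = x ^ 2) :
    phiTilde τ x y = ((-(Real.sign x * erfc (Real.sqrt (2 * Real.pi * τ.im) * |x|)) : ℝ) : ℂ) := by
  have h' : (y:ℂ) ^ 2 = (x:ℂ) ^ 2 := by exact_mod_cast h
  simp [phiTilde, phiPlus, phiStar, h, h', eC]

lemma sign_mul_pos (a : ℝ) (ha : 0 < a) (x : ℝ) : Real.sign (a * x) = Real.sign x := by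
  rcases lt_trichotomy x 0 with h | h | h
  · rw [Real.sign_of_neg h, Real.sign_of_neg (mul_neg_of_pos_of_neg ha h)]
  · simp [h]
  · rw [Real.sign_of_pos h, Real.sign_of_pos (mul_pos ha h)]

/-- for fixed `τ` in the upper half-plane, `t ↦ Θ̃_h(τ,t)` is bounded
on `(0,∞)`. -/
theorem stmt18 (N : ℕ) (hN : 0 < N) (h : ℤ × ℤ) (τ : ℂ) (hτ : 0 < τ.im) :
    ∃ C : ℝ, ∀ t : ℝ, 0 < t → ‖ThetaTilde N h τ t‖ ≤ C := by
  have hN' : (0:ℝ) < N := by exact_mod_cast hN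
  set κ : ℝ := Real.pi * τ.im / N with hκ
  have hκ0 : 0 < κ := by positivity
  let E : ℤ → ℝ := fun m => Real.exp (-(κ * |(m:ℝ)|))
  have hE : Summable fun p : ℤ × ℤ => 2 * (E (h.1 + N * p.1) * E (h.2 + N * p.2)) := by
    have e1 := (summ_exp hκ0).comp_injective (inj_aff N hN h.1)
    have e2 := (summ_exp hκ0).comp_injective (inj_aff N hN h.2)
    exact (e1.mul_of_nonneg e2 (fun _ => (Real.exp_pos _).le) (fun _ => (Real.exp_pos _).le)).mul_left 2
  refine ⟨‖(cH0 N h : ℂ)‖ + ((∑' p : ℤ × ℤ, 2 * (E (h.1 + N * p.1) * E (h.2 + N * p.2))) + 2 + 2),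
    fun t ht => ?_⟩
  unfold ThetaTilde
  refine (norm_add_le _ _).trans (add_le_add le_rfl ?_)
  set f : ℤ → ℤ → ℂ := fun m n => phiTilde τ (iota N t (m:ℝ) (n:ℝ)).1 (iota N t (m:ℝ) (n:ℝ)).2 with hf
  change ‖∑' p : ℤ × ℤ, f (h.1 + N * p.1) (h.2 + N * p.2)‖ ≤ _
  have hq : 0 < Real.sqrt (2 * N) := Real.sqrt_pos.mpr (by positivity)
  have hq2 : Real.sqrt (2 * N) ^ 2 = 2 * N := Real.sq_sqrt (by positivity)
  set c : ℝ := Real.sqrt (2 * Real.pi * τ.im) with hc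
  have hc0 : 0 < c := Real.sqrt_pos.mpr (by positivity)
  have hfb : ∀ m n : ℤ, m ≠ 0 → n ≠ 0 → ‖f m n‖ ≤ 2 * (E m * E n) := by
    intro m n hm hn
    refine (phi_bound τ hτ _ _).trans ?_
    simp only [E]
    rw [← Real.exp_add]
    refine mul_le_mul_of_nonneg_left (Real.exp_le_exp.mpr ?_) (by norm_num)
    have hd : (iota N t (m:ℝ) (n:ℝ)).2 ^ 2 - (iota N t (m:ℝ) (n:ℝ)).1 ^ 2 = -(2 / N * (m * n)) := by
      simp only [iota, div_pow, hq2]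
      field_simp
      ring
    rw [hd, abs_neg, abs_mul, abs_mul, abs_of_pos (by positivity : (0:ℝ) < 2 / N)]
    have h1 : (1:ℝ) ≤ |(m:ℝ)| := by exact_mod_cast Int.one_le_abs hm
    have h2 : (1:ℝ) ≤ |(n:ℝ)| := by exact_mod_cast Int.one_le_abs hn
    have h3 : |(m:ℝ)| + |(n:ℝ)| ≤ 2 * (|(m:ℝ)| * |(n:ℝ)|) := by nlinarith
    have h4 : Real.pi * τ.im * (2 / N * (|(m:ℝ)| * |(n:ℝ)|)) = κ * (2 * (|(m:ℝ)| * |(n:ℝ)|)) := by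
      rw [hκ]; ring
    rw [h4]
    nlinarith [mul_le_mul_of_nonneg_left h3 hκ0.le]
  have hf0 : ∀ n : ℤ, f 0 n = ((-(Real.sign (n:ℝ) * erfc (c * (t / Real.sqrt (2 * N)) * |(n:ℝ)|)) : ℝ) : ℂ) := by
    intro n
    have ha : 0 < t / Real.sqrt (2 * N) := by positivity
    have e1 : (iota N t ((0:ℤ):ℝ) (n:ℝ)).1 = t / Real.sqrt (2 * N) * n := by
      simp [iota]; ring
    have e2 : (iota N t ((0:ℤ):ℝ) (n:ℝ)).2 = -(t / Real.sqrt (2 * N) * n) := by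
      simp [iota]; ring
    simp only [hf]
    rw [e1, e2, phi_axis _ _ _ (by ring), sign_mul_pos _ ha, abs_mul, abs_of_pos ha, ← mul_assoc]
  have hf1 : ∀ n : ℤ, f n 0 = ((-(Real.sign (n:ℝ) * erfc (c * (t⁻¹ / Real.sqrt (2 * N)) * |(n:ℝ)|)) : ℝ) : ℂ) := by
    intro n
    have ha : 0 < t⁻¹ / Real.sqrt (2 * N) := by positivity
    have e1 : (iota N t (n:ℝ) ((0:ℤ):ℝ)).1 = t⁻¹ / Real.sqrt (2 * N) * n := by
      simp [iota]; ring
    have e2 : (iota N t (n:ℝ) ((0:ℤ):ℝ)).2 = t⁻¹ / Real.sqrt (2 * N) * n := by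
      simp [iota]; ring
    simp only [hf]
    rw [e1, e2, phi_axis _ _ _ rfl, sign_mul_pos _ ha, abs_mul, abs_of_pos ha, ← mul_assoc]
  have hB := axisE N hN h.2 (c * (t / Real.sqrt (2 * N))) (by positivity)
  have hD := axisE N hN h.1 (c * (t⁻¹ / Real.sqrt (2 * N))) (by positivity)
  simp only [← hf0] at hB
  simp only [← hf1] at hD
  obtain ⟨sB, bB⟩ := line N hN h.1 _ hB.1 hB.2
  obtain ⟨sD', bD'⟩ := line N hN h.2 _ hD.1 hD.2
  have sD := (Equiv.prodComm ℤ ℤ).summable_iff.mpr sD'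
  have bD := bD'
  rw [← (Equiv.prodComm ℤ ℤ).tsum_eq] at bD
  simp only [Function.comp_def, Equiv.prodComm_apply, Prod.fst_swap, Prod.snd_swap] at sD bD
  let A : ℤ × ℤ → ℂ := fun p =>
    if h.1 + N * p.1 ≠ 0 ∧ h.2 + N * p.2 ≠ 0 then f (h.1 + N * p.1) (h.2 + N * p.2) else 0
  have hA : ∀ p, ‖A p‖ ≤ 2 * (E (h.1 + N * p.1) * E (h.2 + N * p.2)) := by
    intro p
    simp only [A]
    split_ifs with hp
    · exact hfb _ _ hp.1 hp.2
    · rw [norm_zero]; positivity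
  have sA : Summable A := Summable.of_norm_bounded hE hA
  have bA := tsum_of_norm_bounded hE.hasSum hA
  have hsplit : ∀ p : ℤ × ℤ, f (h.1 + N * p.1) (h.2 + N * p.2) =
      A p + (if h.1 + N * p.1 = 0 then f 0 (h.2 + N * p.2) else 0)
        + (if h.2 + N * p.2 = 0 then f (h.1 + N * p.1) 0 else 0) := by
    intro p
    have f00 : f 0 0 = 0 := by rw [hf0]; simp
    simp only [A]
    by_cases h1 : h.1 + N * p.1 = 0 <;> by_cases h2 : h.2 + N * p.2 = 0 <;> simp [h1, h2, f00]
  rw [(tsum_congr hsplit).trans ((sA.hasSum.add sB.hasSum).add sD.hasSum).tsum_eq]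
  exact (norm_add_le _ _).trans (add_le_add ((norm_add_le _ _).trans (add_le_add bA bB)) bD)

end
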